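/- Let p be prime and consider n ≥ 1 concurrent lines ℓ_1, …, ℓ_n in PG(2,p) through a point P, and let r be an integer with 0 ≤ r ≤ n − 2. Then the set C(P,{ℓ_1,…,ℓ_n},r) = {c ∈ C(2,p) : supp(c) ⊆ ℓ_1 ∪ … ∪ ℓ_n and rk_P(c) ≤ r} is an 𝔽_p-subspace of C(2,p) of dimension (r+1)(2n − 2 − r)/2 + 1. In particular, the subspace of all codewords whose support is contained in ℓ_1 ∪ … ∪ ℓ_n has dimension n(n−1)/2 + 1. -/

import Mathlib

/-!
Since `χ_ℓ(v) = 1 - (ℓ · v) ^ (p - 1)`, every codeword is `a + H` with `a` a scalar and `H` a form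
of degree `p - 1` in `X, Y, Z` (`exists_form_of_mem_code`). Conversely all these functions are
codewords (`form_mem_code`): the constant `1` is the sum of the lines of a pencil, and each monomial
of degree `p - 1` is isolated from the powers of linear forms by interpolation, as the binomial
coefficients involved are nonzero mod `p`.

Choose coordinates with `P = (0, 0, 1)` and one of the lines equal to `Y = 0` (`exists_coords`). The
points off the `n` lines are then the `(t, 1, z)` with `t` in a set `T` of `p + 1 - n` elements.
Write `H = ∑ Z ^ k h_k(X, Y)`. As a polynomial in `z` of degree less than `p`, the codeword
vanishes off the lines iff `h_k(t, 1)`, with `a` added when `k = 0`, vanishes for all `t ∈ T`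
and all `k` (`support_iff`); that is, iff this polynomial of degree less than `p - k` is
`∏ (X - t)` times a polynomial of degree less than `n - 1 - k` (`vanish_iff`). The rank at `P` is
at most `r` iff `h_k = 0` for `k > r` (`rkLe_iff`); independence of the coordinates is
`rank_transfer`. So the scalar `a` and the cofactors for `k ≤ r` parametrize the codewords linearly
and injectively (`paramMap_injective`, `range_paramMap`), and the dimension is
`1 + ∑_{k ≤ r} (n - 1 - k)`. For `k ≥ n - 1` the cofactor is zero, so without the rank condition
the answer is that for `r = n - 2` (`rkLe_of_support`).
-/

attribute [local instance] Classical.propDecidable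

noncomputable section

/-- Points of `PG(2,q)`: 1-dimensional subspaces of `F³`. -/
abbrev PGPoint (F : Type) [Field F] := Projectivization F (Fin 3 → F)

instance (F : Type) [Field F] [Fintype F] : Finite (PGPoint F) := Quotient.finite _

variable {F : Type} [Field F]

/-- Incidence between a line with dual coordinates `l` and a point `P` of `PG(2,q)`. -/
def PGIncident (l P : PGPoint F) : Prop := ∑ i, l.rep i * P.rep i = 0

/-- The number of points of the multiset `M`, counted with multiplicity, on the line `l`. -/
def lineMeets (M : Multiset (PGPoint F)) (l : PGPoint F) : ℕ :=
  Multiset.countP (PGIncident l) M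

/-- The multiset of all points of the line `l`, each with multiplicity one. -/
def pgLinePts [Fintype F] (l : PGPoint F) : Multiset (PGPoint F) :=
  (Set.toFinite {P | PGIncident l P}).toFinset.val

/-- The characteristic function (with values in `𝔽_p`) of the line `l`. -/
def chi (p : ℕ) (l : PGPoint F) : PGPoint F → ZMod p :=
  fun P => if PGIncident l P then 1 else 0

/-- The code `C(2,q)`: the `𝔽_p`-linear span of the characteristic functions of lines. -/
def code (p : ℕ) (F : Type) [Field F] : Submodule (ZMod p) (PGPoint F → ZMod p) :=
  Submodule.span (ZMod p) (Set.range (chi p))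

/-- The image of a point of `PG(2,p)` under the projective transformation induced
by a linear automorphism `g` of `F³`. -/
def ptMap (p : ℕ) [Fact p.Prime]
    (g : (Fin 3 → ZMod p) ≃ₗ[ZMod p] (Fin 3 → ZMod p)) :
    PGPoint (ZMod p) → PGPoint (ZMod p) :=
  Projectivization.map g.toLinearMap g.injective

/-- `Fc` is the unique polynomial representing the function `c` on the points of
`PG(2,p)`: it has degree at most `p - 1` in each variable, it does not contain the
monomial `X^(p-1) * Y^(p-1) * Z^(p-1)`, and it computes `c` on every nonzero vector. -/
def IsPolyRep (p : ℕ) [Fact p.Prime] (c : PGPoint (ZMod p) → ZMod p)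
    (Fc : MvPolynomial (Fin 3) (ZMod p)) : Prop :=
  (∀ i, Fc.degreeOf i ≤ p - 1) ∧
  Fc.coeff (Finsupp.single 0 (p - 1) + Finsupp.single 1 (p - 1) +
      Finsupp.single 2 (p - 1)) = 0 ∧
  ∀ (v : Fin 3 → ZMod p) (hv : v ≠ 0),
    MvPolynomial.eval v Fc = c (Projectivization.mk (ZMod p) v hv)

lemma e001ne (p : ℕ) [Fact p.Prime] : (![0, 0, 1] : Fin 3 → ZMod p) ≠ 0 :=
  fun h => by simpa using congrFun h 2

/-- `rk_P(c) ≤ r`: for any projective transformation `φ` (induced by `g`) mapping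
`(0,0,1)` to `P`, the `Z`-degree of the polynomial representing `c ∘ φ` is at most `r`. -/
def rkLe (p : ℕ) [Fact p.Prime] (c : PGPoint (ZMod p) → ZMod p)
    (P : PGPoint (ZMod p)) (r : ℕ) : Prop :=
  ∀ (g : (Fin 3 → ZMod p) ≃ₗ[ZMod p] (Fin 3 → ZMod p)),
    ptMap p g (Projectivization.mk (ZMod p) ![0, 0, 1] (e001ne p)) = P →
    ∀ Fc : MvPolynomial (Fin 3) (ZMod p),
      IsPolyRep p (fun Q => c (ptMap p g Q)) Fc → Fc.degreeOf 2 ≤ r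

open Polynomial Finset

/-! ### Polynomial bookkeeping -/

/-- If all values `∑ i < p, u ^ i • b i`, `u ∈ 𝔽_p`, of a vector-valued polynomial lie in a
subspace, so do its coefficients (Lagrange interpolation at the `p` elements of `𝔽_p`). -/
lemma coeff_mem_of_eval_mem {p : ℕ} [Fact p.Prime] {V : Type*} [AddCommGroup V]
    [Module (ZMod p) V] (S : Submodule (ZMod p) V) (b : ℕ → V)
    (h : ∀ u : ZMod p, ∑ i ∈ range p, u ^ i • b i ∈ S) (j : ℕ) (hj : j < p) : b j ∈ S := by
  have key : ∀ i < p, ∑ u : ZMod p, (Lagrange.basis univ id u).coeff j * u ^ i =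
      if j = i then 1 else 0 := by
    intro i hi
    have h1 := Lagrange.eq_interpolate (s := (univ : Finset (ZMod p))) (v := id)
      (f := (X ^ i : (ZMod p)[X])) (Function.injective_id.injOn) (by
        rw [degree_X_pow, card_univ, ZMod.card]; exact_mod_cast hi)
    have h2 := congrArg (fun f => f.coeff j) h1
    simp only [Lagrange.interpolate_apply, finsetSum_coeff, coeff_C_mul, coeff_X_pow] at h2
    rw [h2]
    refine Finset.sum_congr rfl fun u _ => ?_
    simp [mul_comm]
  have h3 : ∑ u : ZMod p, (Lagrange.basis univ id u).coeff j • ∑ i ∈ range p, u ^ i • b i = b j := by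
    simp only [Finset.smul_sum, smul_smul]
    rw [Finset.sum_comm]
    simp only [← Finset.sum_smul]
    rw [Finset.sum_congr rfl (fun i hi => by rw [key i (Finset.mem_range.1 hi)])]
    simp [hj]
  rw [← h3]
  exact S.sum_mem fun u _ => S.smul_mem _ (h u)

/-- The value at `(x, y)` of the degree `d` homogenization of a univariate polynomial. -/
def homEval {p : ℕ} (d : ℕ) (x y : ZMod p) : (ZMod p)[X] →ₗ[ZMod p] ZMod p :=
  ∑ i ∈ range (d + 1), (x ^ i * y ^ (d - i)) • Polynomial.lcoeff (ZMod p) i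

lemma homEval_apply {p : ℕ} (d : ℕ) (x y : ZMod p) (f : (ZMod p)[X]) :
    homEval d x y f = ∑ i ∈ range (d + 1), x ^ i * y ^ (d - i) * f.coeff i := by
  simp [homEval, LinearMap.sum_apply]

lemma homEval_smul {p : ℕ} (d : ℕ) (s x y : ZMod p) (f : (ZMod p)[X]) :
    homEval d (s * x) (s * y) f = s ^ d * homEval d x y f := by
  simp only [homEval_apply, Finset.mul_sum]
  refine Finset.sum_congr rfl fun i hi => ?_
  have : d = i + (d - i) := by have := Finset.mem_range.1 hi; omega
  rw [mul_pow, mul_pow]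
  conv_rhs => rw [this, pow_add]
  simp only [add_tsub_cancel_left]
  ring

lemma homEval_one {p : ℕ} (d : ℕ) (t : ZMod p) {f : (ZMod p)[X]}
    (hf : f ∈ degreeLT (ZMod p) (d + 1)) : homEval d t 1 f = f.eval t := by
  rw [homEval_apply, eval_eq_sum_degreeLTEquiv hf, Finset.sum_range]
  refine Finset.sum_congr rfl fun i _ => ?_
  simp [degreeLTEquiv, mul_comm]

lemma homEval_C {p : ℕ} (d : ℕ) (x y a : ZMod p) : homEval d x y (C a) = y ^ d * a := by
  rw [homEval_apply, Finset.sum_eq_single 0]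
  · simp
  · intro i _ hi; simp [coeff_C, hi]
  · simp

/-- The function `a + ∑ k, z ^ k * h_k(x, y)` where `h_k` is the binary form of degree
`p - 1 - k` whose dehomogenization is `h k`. These are exactly the codewords. -/
def form {p : ℕ} (a : ZMod p) (h : ℕ → (ZMod p)[X]) (v : Fin 3 → ZMod p) : ZMod p :=
  a + ∑ k ∈ range p, v 2 ^ k * homEval (p - 1 - k) (v 0) (v 1) (h k)

lemma form_smul {p : ℕ} [Fact p.Prime] (a : ZMod p) (h : ℕ → (ZMod p)[X])
    (v : Fin 3 → ZMod p) (s : ZMod p) (hs : s ≠ 0) : form a h (s • v) = form a h v := by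
  unfold form
  congr 1
  refine Finset.sum_congr rfl fun k hk => ?_
  have h1 : s ^ k * s ^ (p - 1 - k) = 1 := by
    rw [← pow_add, show k + (p - 1 - k) = p - 1 by have := Finset.mem_range.1 hk; omega]
    exact ZMod.pow_card_sub_one_eq_one hs
  simp only [Pi.smul_apply, smul_eq_mul, homEval_smul, mul_pow]
  linear_combination (v 2 ^ k * homEval (p - 1 - k) (v 0) (v 1) (h k)) * h1

lemma form_affine {p : ℕ} [Fact p.Prime] (a : ZMod p) (h : ℕ → (ZMod p)[X])
    (hh : ∀ k, h k ∈ degreeLT (ZMod p) (p - k)) (t z : ZMod p) :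
    form a h ![t, 1, z] =
      ∑ k ∈ range p, z ^ k * (h k + if k = 0 then C a else 0).eval t := by
  have hp := (Fact.out : p.Prime).pos
  have h0 : a = ∑ k ∈ range p, z ^ k * (if k = 0 then C a else 0 : (ZMod p)[X]).eval t := by
    rw [Finset.sum_eq_single 0]
    · simp
    · intro k _ hk; simp [hk]
    · simp [hp.ne']
  simp only [eval_add, mul_add, Finset.sum_add_distrib]
  rw [← h0, form, add_comm]
  congr 1
  refine Finset.sum_congr rfl fun k hk => ?_
  have hk := Finset.mem_range.1 hk
  have := homEval_one (p - 1 - k) t (f := h k)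
    (by rw [show p - 1 - k + 1 = p - k by omega]; exact hh k)
  simp [this]

/-- A polynomial of degree less than `p` vanishing on `𝔽_p` is zero. -/
lemma eq_zero_of_eval_all {p : ℕ} [Fact p.Prime] {f : (ZMod p)[X]} {m : ℕ}
    (hf : f ∈ degreeLT (ZMod p) m) (hm : m ≤ p) (h : ∀ t, f.eval t = 0) : f = 0 := by
  refine eq_zero_of_degree_lt_of_eval_finset_eq_zero (s := univ) ?_ (fun t _ => h t)
  rw [card_univ, ZMod.card]
  exact (mem_degreeLT.1 hf).trans_le (by exact_mod_cast hm)

/-! ### The code as a space of polynomial functions -/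

lemma incident_mk {p : ℕ} [Fact p.Prime] (l : PGPoint (ZMod p)) (w : Fin 3 → ZMod p)
    (hw : w ≠ 0) :
    PGIncident l (Projectivization.mk (ZMod p) w hw) ↔ ∑ i, l.rep i * w i = 0 := by
  obtain ⟨a, ha⟩ := Projectivization.exists_smul_eq_mk_rep (ZMod p) w hw
  unfold PGIncident
  rw [← ha]
  have : ∑ i, l.rep i * (a • w) i = a * ∑ i, l.rep i * w i := by
    rw [Finset.mul_sum]
    refine Finset.sum_congr rfl fun i _ => ?_
    simp only [Pi.smul_apply, Units.smul_def, smul_eq_mul]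
    ring
  rw [this]
  simp

lemma one_sub_pow_eq {p : ℕ} [Fact p.Prime] (x : ZMod p) :
    1 - x ^ (p - 1) = if x = 0 then 1 else 0 := by
  have hp := (Fact.out : p.Prime).two_le
  split_ifs with h
  · rw [h, zero_pow (by omega), sub_zero]
  · rw [ZMod.pow_card_sub_one_eq_one h, sub_self]

lemma chi_mk {p : ℕ} [Fact p.Prime] (l : PGPoint (ZMod p)) (w : Fin 3 → ZMod p)
    (hw : w ≠ 0) :
    chi p l (Projectivization.mk (ZMod p) w hw) = 1 - (∑ i, l.rep i * w i) ^ (p - 1) := by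
  rw [one_sub_pow_eq, chi]
  simp only [incident_mk]

/-- The binomial theorem as a homogenization. -/
lemma exists_homEval_pow {p : ℕ} (d : ℕ) (α β : ZMod p) :
    ∃ f ∈ degreeLT (ZMod p) (d + 1), ∀ x y, homEval d x y f = (α * x + β * y) ^ d := by
  refine ⟨∑ i ∈ range (d + 1), monomial i (d.choose i * α ^ i * β ^ (d - i)), ?_, ?_⟩
  · refine Submodule.sum_mem _ fun i hi => ?_
    rw [mem_degreeLT]
    refine (degree_monomial_le _ _).trans_lt ?_
    exact_mod_cast Finset.mem_range.1 hi
  · intro x y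
    rw [homEval_apply, add_pow]
    refine Finset.sum_congr rfl fun i hi => ?_
    simp only [finsetSum_coeff, coeff_monomial]
    rw [Finset.sum_ite_eq' (range (d + 1)) i]
    simp only [hi, if_true, mul_pow]
    ring

lemma exists_form_pow {p : ℕ} [Fact p.Prime] (α β γ : ZMod p) :
    ∃ h : ℕ → (ZMod p)[X], (∀ k, h k ∈ degreeLT (ZMod p) (p - k)) ∧
      ∀ v, form 1 h v = 1 - (α * v 0 + β * v 1 + γ * v 2) ^ (p - 1) := by
  have hp := (Fact.out : p.Prime).pos
  choose f hf hf' using fun d => exists_homEval_pow d α β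
  refine ⟨fun k => if k < p then (-((p - 1).choose k * γ ^ k : ZMod p)) • f (p - 1 - k) else 0,
    ?_, ?_⟩
  · intro k
    dsimp only
    split_ifs with hk
    · refine Submodule.smul_mem _ _ ?_
      rw [show p - k = p - 1 - k + 1 by omega]
      exact hf _
    · exact Submodule.zero_mem _
  · intro v
    rw [form, add_comm _ (γ * v 2), add_pow, sub_eq_add_neg, ← Finset.sum_neg_distrib,
      show p - 1 + 1 = p by omega]
    congr 1
    refine Finset.sum_congr rfl fun k hk => ?_
    simp only [Finset.mem_range.1 hk, if_true, map_smul, hf', smul_eq_mul, mul_pow]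
    ring

/-- In any coordinate system every codeword is given by a `form`. -/
lemma exists_form_of_mem_code {p : ℕ} [Fact p.Prime]
    (g : (Fin 3 → ZMod p) ≃ₗ[ZMod p] (Fin 3 → ZMod p))
    {c : PGPoint (ZMod p) → ZMod p} (hc : c ∈ code p (ZMod p)) :
    ∃ (a : ZMod p) (h : ℕ → (ZMod p)[X]), (∀ k, h k ∈ degreeLT (ZMod p) (p - k)) ∧
      ∀ v (hv : g v ≠ 0), c (Projectivization.mk (ZMod p) (g v) hv) = form a h v := by
  induction hc using Submodule.span_induction with
  | mem c hc =>
    obtain ⟨l, rfl⟩ := hc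
    obtain ⟨h, h1, h2⟩ := exists_form_pow (∑ i, l.rep i * g (Pi.single 0 1) i)
      (∑ i, l.rep i * g (Pi.single 1 1) i) (∑ i, l.rep i * g (Pi.single 2 1) i)
    refine ⟨1, h, h1, fun v hv => ?_⟩
    rw [chi_mk, h2]
    congr 2
    have hv' : g v = v 0 • g (Pi.single 0 1) + v 1 • g (Pi.single 1 1) +
        v 2 • g (Pi.single 2 1) := by
      simp only [← map_smul, ← map_add]
      congr 1
      ext i
      fin_cases i <;> simp
    rw [hv']
    simp only [Fin.sum_univ_three, Pi.add_apply, Pi.smul_apply, smul_eq_mul]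
    ring
  | zero => exact ⟨0, 0, fun k => Submodule.zero_mem _, fun v hv => by simp [form]⟩
  | add c c' _ _ ih ih' =>
    obtain ⟨a, h, h1, h2⟩ := ih
    obtain ⟨a', h', h1', h2'⟩ := ih'
    refine ⟨a + a', h + h', fun k => Submodule.add_mem _ (h1 k) (h1' k), fun v hv => ?_⟩
    simp only [Pi.add_apply, h2 v hv, h2' v hv, form, map_add, mul_add, Finset.sum_add_distrib]
    ring
  | smul s c _ ih =>
    obtain ⟨a, h, h1, h2⟩ := ih
    refine ⟨s * a, s • h, fun k => Submodule.smul_mem _ _ (h1 k), fun v hv => ?_⟩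
    simp only [Pi.smul_apply, smul_eq_mul, h2 v hv, form, map_smul, mul_add, Finset.mul_sum]
    congr 1
    refine Finset.sum_congr rfl fun k hk => ?_
    ring

lemma one_sub_pow_mem_code {p : ℕ} [Fact p.Prime] (u : Fin 3 → ZMod p) (hu : u ≠ 0) :
    (fun Q : PGPoint (ZMod p) => 1 - (∑ i, u i * Q.rep i) ^ (p - 1)) ∈ code p (ZMod p) := by
  refine Submodule.subset_span ⟨Projectivization.mk (ZMod p) u hu, ?_⟩
  funext Q
  obtain ⟨a, ha⟩ := Projectivization.exists_smul_eq_mk_rep (ZMod p) u hu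
  conv_lhs => rw [← Projectivization.mk_rep Q]
  rw [chi_mk, ← ha]
  have : ∑ i, (a • u) i * Q.rep i = a * ∑ i, u i * Q.rep i := by
    rw [Finset.mul_sum]
    refine Finset.sum_congr rfl fun i _ => ?_
    simp only [Pi.smul_apply, Units.smul_def, smul_eq_mul]
    ring
  rw [this, mul_pow, ZMod.pow_card_sub_one_eq_one a.ne_zero, one_mul]

/-- The constant function is the sum of the `p + 1` lines of a pencil: every point but the
vertex is on one of them, and the vertex is on `p + 1 = 1` of them. -/
lemma one_mem_code {p : ℕ} [Fact p.Prime] :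
    (fun _ : PGPoint (ZMod p) => (1 : ZMod p)) ∈ code p (ZMod p) := by
  have h1 : ∀ t : ZMod p, (![1, t, 0] : Fin 3 → ZMod p) ≠ 0 :=
    fun t h => by simpa using congrFun h 0
  have h2 : (![0, 1, 0] : Fin 3 → ZMod p) ≠ 0 := fun h => by simpa using congrFun h 1
  have h3 := Submodule.add_mem _
    (Submodule.sum_mem (t := univ) _ fun t _ => one_sub_pow_mem_code _ (h1 t))
    (one_sub_pow_mem_code _ h2)
  convert h3 using 1
  funext Q
  simp only [Pi.add_apply, Finset.sum_apply, Fin.sum_univ_three, one_sub_pow_eq]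
  simp only [Matrix.cons_val_zero, Matrix.cons_val_one, Matrix.cons_val, one_mul, zero_mul,
    add_zero, zero_add]
  by_cases hy : Q.rep 1 = 0
  · simp [hy]
  · have : ∀ t : ZMod p, (Q.rep 0 + t * Q.rep 1 = 0) ↔ t = -Q.rep 0 / Q.rep 1 := by
      intro t
      rw [eq_div_iff hy]
      constructor <;> intro h <;> linear_combination h
    simp only [this, hy, if_false, add_zero]
    simp

lemma pow_mem_code {p : ℕ} [Fact p.Prime] (φ : (Fin 3 → ZMod p) →ₗ[ZMod p] ZMod p) :
    (fun Q : PGPoint (ZMod p) => φ Q.rep ^ (p - 1)) ∈ code p (ZMod p) := by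
  have hp := (Fact.out : p.Prime).two_le
  have hφ : ∀ w, φ w = ∑ i, φ (Pi.single i 1) * w i := by
    intro w
    conv_lhs => rw [← Finset.univ_sum_single w]
    rw [map_sum]
    refine Finset.sum_congr rfl fun i _ => ?_
    rw [mul_comm, ← smul_eq_mul, ← map_smul, ← Pi.single_smul, smul_eq_mul, mul_one]
  by_cases hu : (fun i => φ (Pi.single i 1)) = 0
  · convert Submodule.zero_mem _ using 1
    funext Q
    rw [hφ]
    have : ∀ i, φ (Pi.single i 1) = 0 := fun i => congrFun hu i
    simp only [this, zero_mul, Finset.sum_const_zero]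
    rw [zero_pow (by omega), Pi.zero_apply]
  · convert Submodule.sub_mem _ one_mem_code (one_sub_pow_mem_code _ hu) using 1
    funext Q
    rw [hφ]
    simp

lemma choose_ne_zero_zmod {p : ℕ} [Fact p.Prime] {d i : ℕ} (hd : d < p) (hi : i ≤ d) :
    ((d.choose i : ℕ) : ZMod p) ≠ 0 := by
  have hp : p.Prime := Fact.out
  rw [Ne, ZMod.natCast_eq_zero_iff]
  intro h
  have h1 : p ∣ d.factorial := by
    rw [← Nat.choose_mul_factorial_mul_factorial hi, mul_assoc]
    exact h.mul_right _
  exact absurd (hp.dvd_factorial.1 h1) (by omega)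

/-- Expanding `(u x + s y + z) ^ (p - 1)` in `u` and in `s` isolates each monomial. -/
lemma monomial_mem_code {p : ℕ} [Fact p.Prime]
    (g : (Fin 3 → ZMod p) ≃ₗ[ZMod p] (Fin 3 → ZMod p)) (i j k : ℕ) (h : i + j + k = p - 1) :
    (fun Q : PGPoint (ZMod p) => g.symm Q.rep 0 ^ i * g.symm Q.rep 1 ^ j * g.symm Q.rep 2 ^ k) ∈
      code p (ZMod p) := by
  have hp := (Fact.out : p.Prime).two_le
  have step1 : ∀ s : ZMod p, (fun Q : PGPoint (ZMod p) => g.symm Q.rep 0 ^ i *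
      (s * g.symm Q.rep 1 + g.symm Q.rep 2) ^ (p - 1 - i)) ∈ code p (ZMod p) := by
    intro s
    have := coeff_mem_of_eval_mem (code p (ZMod p))
      (fun i => fun Q : PGPoint (ZMod p) => g.symm Q.rep 0 ^ i *
        (s * g.symm Q.rep 1 + g.symm Q.rep 2) ^ (p - 1 - i) * ((p - 1).choose i : ZMod p)) ?_
      i (by omega)
    · have h2 := Submodule.smul_mem _ (((p - 1).choose i : ZMod p))⁻¹ this
      convert h2 using 1
      funext Q
      have := choose_ne_zero_zmod (p := p) (d := p - 1) (i := i) (by omega) (by omega)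
      simp only [Pi.smul_apply, smul_eq_mul]
      field_simp
    · intro u
      convert pow_mem_code ((u • LinearMap.proj 0 + s • LinearMap.proj 1 + LinearMap.proj 2) ∘ₗ
        g.symm.toLinearMap) using 1
      funext Q
      simp only [Finset.sum_apply, Pi.smul_apply, smul_eq_mul, LinearMap.comp_apply,
        LinearMap.add_apply, LinearMap.smul_apply, LinearMap.proj_apply, LinearEquiv.coe_coe]
      rw [add_assoc, add_pow, show p - 1 + 1 = p by omega]
      refine Finset.sum_congr rfl fun m _ => ?_
      rw [mul_pow]
      ring
  have := coeff_mem_of_eval_mem (code p (ZMod p))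
      (fun j => if j ≤ p - 1 - i then fun Q : PGPoint (ZMod p) => g.symm Q.rep 0 ^ i *
        (g.symm Q.rep 1 ^ j * g.symm Q.rep 2 ^ (p - 1 - i - j) * ((p - 1 - i).choose j : ZMod p))
        else 0) ?_
      j (by omega)
  · rw [if_pos (by omega)] at this
    have h2 := Submodule.smul_mem _ (((p - 1 - i).choose j : ZMod p))⁻¹ this
    convert h2 using 1
    funext Q
    have := choose_ne_zero_zmod (p := p) (d := p - 1 - i) (i := j) (by omega) (by omega)
    simp only [Pi.smul_apply, smul_eq_mul]
    rw [show p - 1 - i - j = k by omega]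
    field_simp
  · intro s
    convert step1 s using 1
    funext Q
    rw [add_pow, Finset.mul_sum, Finset.sum_apply]
    rw [← Finset.sum_subset (s₁ := range (p - 1 - i + 1))]
    · refine Finset.sum_congr rfl fun m hm => ?_
      have := Finset.mem_range.1 hm
      rw [if_pos (by omega)]
      simp only [Pi.smul_apply, smul_eq_mul, mul_pow]
      ring
    · intro m hm
      simp only [Finset.mem_range] at *
      omega
    · intro m _ hm
      rw [if_neg (by simp only [Finset.mem_range] at hm; omega)]
      simp

lemma form_mem_code {p : ℕ} [Fact p.Prime]
    (g : (Fin 3 → ZMod p) ≃ₗ[ZMod p] (Fin 3 → ZMod p)) (a : ZMod p) (h : ℕ → (ZMod p)[X]) :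
    (fun Q : PGPoint (ZMod p) => form a h (g.symm Q.rep)) ∈ code p (ZMod p) := by
  have hp := (Fact.out : p.Prime).two_le
  have h2 : (∑ k ∈ range p, ∑ i ∈ range (p - 1 - k + 1), (h k).coeff i •
      fun Q : PGPoint (ZMod p) => g.symm Q.rep 0 ^ i * g.symm Q.rep 1 ^ (p - 1 - k - i) *
        g.symm Q.rep 2 ^ k) ∈ code p (ZMod p) := by
    refine Submodule.sum_mem _ fun k hk => Submodule.sum_mem _ fun i hi =>
      Submodule.smul_mem _ _ (monomial_mem_code g _ _ _ ?_)
    simp only [Finset.mem_range] at hk hi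
    omega
  convert Submodule.add_mem _ (Submodule.smul_mem _ a one_mem_code) h2 using 1
  funext Q
  simp only [form, homEval_apply, Pi.add_apply, Pi.smul_apply, Finset.sum_apply, smul_eq_mul,
    mul_one, Finset.mul_sum]
  congr 1
  refine Finset.sum_congr rfl fun k _ => Finset.sum_congr rfl fun i _ => ?_
  ring

/-! ### The representing polynomial and the rank -/

/-- The exponent of `X ^ i * Y ^ j * Z ^ k`. -/
def expo (i j k : ℕ) : Fin 3 →₀ ℕ :=
  Finsupp.single 0 i + Finsupp.single 1 j + Finsupp.single 2 k

@[simp] lemma expo_zero (i j k : ℕ) : expo i j k 0 = i := by simp [expo]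
@[simp] lemma expo_one (i j k : ℕ) : expo i j k 1 = j := by simp [expo]
@[simp] lemma expo_two (i j k : ℕ) : expo i j k 2 = k := by simp [expo]

/-- The three-variable polynomial underlying `form a h`. -/
def formPoly {p : ℕ} (a : ZMod p) (h : ℕ → (ZMod p)[X]) : MvPolynomial (Fin 3) (ZMod p) :=
  MvPolynomial.C a + ∑ k ∈ range p, ∑ i ∈ range (p - 1 - k + 1),
    MvPolynomial.monomial (expo i (p - 1 - k - i) k) ((h k).coeff i)

lemma eval_formPoly {p : ℕ} (a : ZMod p) (h : ℕ → (ZMod p)[X]) (v : Fin 3 → ZMod p) :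
    MvPolynomial.eval v (formPoly a h) = form a h v := by
  simp only [formPoly, form, homEval_apply, map_add, map_sum, MvPolynomial.eval_C,
    MvPolynomial.eval_monomial, Finset.mul_sum]
  congr 1
  refine Finset.sum_congr rfl fun k _ => Finset.sum_congr rfl fun i _ => ?_
  rw [Finsupp.prod_fintype _ _ (by simp)]
  simp only [Fin.prod_univ_three, expo_zero, expo_one, expo_two]
  ring

lemma coeff_formPoly {p : ℕ} (a : ZMod p) (h : ℕ → (ZMod p)[X]) (m : Fin 3 →₀ ℕ) :
    (formPoly a h).coeff m = (if 0 = m then a else 0) +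
      ∑ k ∈ range p, ∑ i ∈ range (p - 1 - k + 1),
        if expo i (p - 1 - k - i) k = m then (h k).coeff i else 0 := by
  simp only [formPoly, MvPolynomial.coeff_add, MvPolynomial.coeff_sum, MvPolynomial.coeff_C,
    MvPolynomial.coeff_monomial]

/-- Every monomial of `formPoly a h` is constant, or comes from a nonzero coefficient of
some `h k`. -/
lemma mem_support_formPoly {p : ℕ} {a : ZMod p} {h : ℕ → (ZMod p)[X]} {m : Fin 3 →₀ ℕ}
    (hm : m ∈ (formPoly a h).support) :
    m = 0 ∨ ∃ k < p, ∃ i < p - 1 - k + 1, (h k).coeff i ≠ 0 ∧ m = expo i (p - 1 - k - i) k := by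
  rw [MvPolynomial.mem_support_iff, coeff_formPoly] at hm
  by_contra! hcon
  apply hm
  rw [if_neg (fun e => hcon.1 e.symm), zero_add]
  refine Finset.sum_eq_zero fun k hk => Finset.sum_eq_zero fun i hi => ?_
  split_ifs with e
  · by_contra hne
    exact hcon.2 k (Finset.mem_range.1 hk) i (Finset.mem_range.1 hi) hne e.symm
  · rfl

lemma formPoly_isPolyRep {p : ℕ} [Fact p.Prime]
    {c : PGPoint (ZMod p) → ZMod p} (a : ZMod p) (h : ℕ → (ZMod p)[X])
    (hc : ∀ v (hv : v ≠ 0), c (Projectivization.mk (ZMod p) v hv) = form a h v) :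
    IsPolyRep p c (formPoly a h) := by
  have hp := (Fact.out : p.Prime).two_le
  refine ⟨fun j => ?_, ?_, fun v hv => by rw [eval_formPoly, hc]⟩
  · rw [MvPolynomial.degreeOf_le_iff]
    intro m hm
    rcases mem_support_formPoly hm with rfl | ⟨k, hk, i, hi, -, rfl⟩
    · simp
    · fin_cases j
      · simp only [Fin.zero_eta, expo_zero]; omega
      · simp only [Fin.mk_one, expo_one]; omega
      · simp only [Fin.reduceFinMk, expo_two]; omega
  · by_contra hne
    change (formPoly a h).coeff (expo (p - 1) (p - 1) (p - 1)) ≠ 0 at hne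
    rcases mem_support_formPoly (MvPolynomial.mem_support_iff.2 hne) with e | ⟨k, hk, i, hi, -, e⟩
    · have := DFunLike.congr_fun e 0
      simp at this
      omega
    · have h0 := DFunLike.congr_fun e 0
      have h2 := DFunLike.congr_fun e 2
      simp only [expo_zero, expo_two] at h0 h2
      omega

/-- Uniqueness of the representing polynomial: the difference `D` of two of them agrees on `𝔽_p³`
with `D(0) * ∏ (1 - X_i ^ (p - 1))`, and comparing the coefficients of
`X ^ (p - 1) * Y ^ (p - 1) * Z ^ (p - 1)` gives `D(0) = 0`. -/
lemma IsPolyRep.unique {p : ℕ} [Fact p.Prime] {c : PGPoint (ZMod p) → ZMod p}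
    {A B : MvPolynomial (Fin 3) (ZMod p)} (hA : IsPolyRep p c A) (hB : IsPolyRep p c B) :
    A = B := by
  have hp := (Fact.out : p.Prime).two_le
  have memR : ∀ f : MvPolynomial (Fin 3) (ZMod p), (∀ i, f.degreeOf i ≤ p - 1) →
      f ∈ MvPolynomial.restrictDegree (Fin 3) (ZMod p) (Fintype.card (ZMod p) - 1) := by
    intro f hf
    rw [MvPolynomial.mem_restrictDegree, ZMod.card]
    intro s hs i
    exact (MvPolynomial.monomial_le_degreeOf i hs).trans (hf i)
  have hev : ∀ v, v ≠ 0 → MvPolynomial.eval v (A - B) = 0 := by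
    intro v hv
    rw [map_sub, hA.2.2 v hv, hB.2.2 v hv, sub_self]
  set d := MvPolynomial.eval 0 (A - B) with hd
  set E : MvPolynomial (Fin 3) (ZMod p) := MvPolynomial.C d *
    ((1 - MvPolynomial.X 0 ^ (p - 1)) * (1 - MvPolynomial.X 1 ^ (p - 1)) *
      (1 - MvPolynomial.X 2 ^ (p - 1))) with hE
  have hEexp : E = MvPolynomial.monomial (expo 0 0 0) d
      - MvPolynomial.monomial (expo (p - 1) 0 0) d - MvPolynomial.monomial (expo 0 (p - 1) 0) d
      - MvPolynomial.monomial (expo 0 0 (p - 1)) d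
      + MvPolynomial.monomial (expo (p - 1) (p - 1) 0) d
      + MvPolynomial.monomial (expo (p - 1) 0 (p - 1)) d
      + MvPolynomial.monomial (expo 0 (p - 1) (p - 1)) d
      - MvPolynomial.monomial (expo (p - 1) (p - 1) (p - 1)) d := by
    have : ∀ i j k, MvPolynomial.monomial (expo i j k) d =
        MvPolynomial.C d * (MvPolynomial.X 0 ^ i * MvPolynomial.X 1 ^ j * MvPolynomial.X 2 ^ k) := by
      intro i j k
      rw [MvPolynomial.monomial_eq, Finsupp.prod_fintype _ _ (by simp)]
      simp [Fin.prod_univ_three]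
    simp only [this, hE]
    ring
  have hmon : ∀ i j k, i ≤ p - 1 → j ≤ p - 1 → k ≤ p - 1 →
      MvPolynomial.monomial (expo i j k) d ∈
        MvPolynomial.restrictDegree (Fin 3) (ZMod p) (Fintype.card (ZMod p) - 1) := by
    intro i j k hi hj hk
    rw [MvPolynomial.mem_restrictDegree, ZMod.card]
    intro s hs m
    have := MvPolynomial.support_monomial_subset hs
    rw [Finset.mem_singleton] at this
    subst this
    fin_cases m
    · simpa using hi
    · simpa using hj
    · simpa using hk
  have hEmem : E ∈ MvPolynomial.restrictDegree (Fin 3) (ZMod p) (Fintype.card (ZMod p) - 1) := by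
    rw [hEexp]
    refine Submodule.sub_mem _ (Submodule.add_mem _ (Submodule.add_mem _ (Submodule.add_mem _
      (Submodule.sub_mem _ (Submodule.sub_mem _ (Submodule.sub_mem _ ?_ ?_) ?_) ?_) ?_) ?_) ?_) ?_
    all_goals apply hmon <;> omega
  have hDE : A - B - E = 0 := by
    refine MvPolynomial.eq_zero_of_eval_eq_zero _ _ _ (fun v => ?_)
      (Submodule.sub_mem _ (Submodule.sub_mem _ (memR A hA.1) (memR B hB.1)) hEmem)
    by_cases hv : v = 0
    · subst hv
      rw [map_sub, ← hd, hE]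
      simp [zero_pow (show p - 1 ≠ 0 by omega)]
    · rw [map_sub, hev v hv, hE]
      simp only [map_mul, map_sub, map_one, map_pow, MvPolynomial.eval_X, MvPolynomial.eval_C,
        one_sub_pow_eq]
      have : ¬ (v 0 = 0 ∧ v 1 = 0 ∧ v 2 = 0) := by
        rintro ⟨h0, h1, h2⟩
        apply hv
        ext i
        fin_cases i <;> assumption
      split_ifs <;> simp_all
  have hc : MvPolynomial.coeff (expo (p - 1) (p - 1) (p - 1)) (A - B - E) = d := by
    have hA2 : MvPolynomial.coeff (expo (p - 1) (p - 1) (p - 1)) A = 0 := hA.2.1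
    have hB2 : MvPolynomial.coeff (expo (p - 1) (p - 1) (p - 1)) B = 0 := hB.2.1
    have hne : ∀ i j k, (i = 0 ∨ j = 0 ∨ k = 0) → expo i j k ≠ expo (p - 1) (p - 1) (p - 1) := by
      intro i j k hijk e
      have h0 := DFunLike.congr_fun e 0
      have h1 := DFunLike.congr_fun e 1
      have h2 := DFunLike.congr_fun e 2
      simp only [expo_zero, expo_one, expo_two] at h0 h1 h2
      omega
    rw [hEexp]
    simp only [MvPolynomial.coeff_sub, MvPolynomial.coeff_add, MvPolynomial.coeff_monomial, hA2,
      hB2]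
    rw [if_neg (hne _ _ _ (by simp)), if_neg (hne _ _ _ (by simp)), if_neg (hne _ _ _ (by simp)),
      if_neg (hne _ _ _ (by simp)), if_neg (hne _ _ _ (by simp)), if_neg (hne _ _ _ (by simp)),
      if_neg (hne _ _ _ (by simp))]
    simp
  rw [hDE, MvPolynomial.coeff_zero] at hc
  rw [hE, ← hc] at hDE
  simpa [sub_eq_zero] using hDE

lemma degreeOf_formPoly_le_iff {p : ℕ} [Fact p.Prime] (a : ZMod p) (h : ℕ → (ZMod p)[X])
    (hh : ∀ k, h k ∈ degreeLT (ZMod p) (p - k)) (r : ℕ) :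
    (formPoly a h).degreeOf 2 ≤ r ↔ ∀ k, r < k → h k = 0 := by
  have hp := (Fact.out : p.Prime).two_le
  rw [MvPolynomial.degreeOf_le_iff]
  constructor
  · intro H k hk
    ext i
    rw [coeff_zero]
    by_contra hne
    have hi : i < p - k := by
      by_contra hi
      exact hne (coeff_eq_zero_of_degree_lt
        ((mem_degreeLT.1 (hh k)).trans_le (by exact_mod_cast not_lt.1 hi)))
    refine absurd (H (expo i (p - 1 - k - i) k) ?_) (by simpa using hk)
    rw [MvPolynomial.mem_support_iff, coeff_formPoly, if_neg, zero_add,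
      Finset.sum_eq_single_of_mem k (Finset.mem_range.2 (by omega)),
      Finset.sum_eq_single_of_mem i (Finset.mem_range.2 (by omega))]
    · simpa using hne
    · intro i' _ hi'
      rw [if_neg]
      intro e
      exact hi' (by simpa using DFunLike.congr_fun e 0)
    · intro k' _ hk'
      refine Finset.sum_eq_zero fun i' _ => ?_
      rw [if_neg]
      intro e
      exact hk' (by simpa using DFunLike.congr_fun e 2)
    · intro e
      have := DFunLike.congr_fun e 2
      simp at this
      omega
  · intro H m hm
    rcases mem_support_formPoly hm with rfl | ⟨k, hk, i, hi, hne, rfl⟩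
    · simp
    · rw [expo_two]
      by_contra hk'
      exact hne (by rw [H k (by omega), coeff_zero])

lemma g_ne_zero {p : ℕ} [Fact p.Prime]
    (g : (Fin 3 → ZMod p) ≃ₗ[ZMod p] (Fin 3 → ZMod p)) {v : Fin 3 → ZMod p} (hv : v ≠ 0) :
    g v ≠ 0 := by
  simpa using hv

lemma vec_ne_zero {p : ℕ} [Fact p.Prime] (t z : ZMod p) : (![t, 1, z] : Fin 3 → ZMod p) ≠ 0 :=
  fun h => by simpa using congrFun h 1

/-- Comparison of coordinate systems with the same third base point: the `Z`-degree bound says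
that `c` is a polynomial of degree at most `r` along each line through that point, a condition
which does not mention the coordinates. -/
lemma rank_transfer {p : ℕ} [Fact p.Prime] {c : PGPoint (ZMod p) → ZMod p}
    {g g' : (Fin 3 → ZMod p) ≃ₗ[ZMod p] (Fin 3 → ZMod p)} {s : ZMod p}
    (hs : g' ![0, 0, 1] = s • g ![0, 0, 1])
    {a a' : ZMod p} {h h' : ℕ → (ZMod p)[X]}
    (hh' : ∀ k, h' k ∈ degreeLT (ZMod p) (p - k))
    (hc : ∀ v (hv : g v ≠ 0), c (Projectivization.mk (ZMod p) (g v) hv) = form a h v)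
    (hc' : ∀ v (hv : g' v ≠ 0), c (Projectivization.mk (ZMod p) (g' v) hv) = form a' h' v)
    {r : ℕ} (hr : ∀ k, r < k → h k = 0) : ∀ k, r < k → h' k = 0 := by
  intro k hk
  by_cases hkp : p ≤ k
  · have := hh' k
    rw [Nat.sub_eq_zero_of_le hkp, mem_degreeLT] at this
    simpa using this
  rw [not_le] at hkp
  refine eq_zero_of_eval_all (hh' k) (by omega) fun t => ?_
  -- `u` is the vector `g' (t, 1, 0)` in the coordinates of `g`.
  set u := g.symm (g' ![t, 1, 0]) with hu
  have hgu : ∀ z : ZMod p, g' ![t, 1, z] = g (u + (s * z) • ![0, 0, 1]) := by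
    intro z
    have e : (![t, 1, z] : Fin 3 → ZMod p) = ![t, 1, 0] + z • ![0, 0, 1] := by
      ext i; fin_cases i <;> simp
    rw [e, map_add, map_smul, hs, map_add, map_smul, hu, LinearEquiv.apply_symm_apply, smul_smul,
      mul_comm]
  -- `f` is the restriction of `c` to the line, as a polynomial in `z`.
  set f : (ZMod p)[X] := C a + ∑ k ∈ range p,
    (C (u 2) + C s * X) ^ k * C (homEval (p - 1 - k) (u 0) (u 1) (h k)) with hf
  have hfdeg : f.natDegree ≤ r := by
    refine (natDegree_add_le _ _).trans (max_le (by simp) ?_)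
    refine natDegree_sum_le_of_forall_le _ _ fun j _ => ?_
    by_cases hj : r < j
    · simp [hr j hj]
    · refine (natDegree_mul_C_le _ _).trans ((natDegree_pow_le_of_le (m := 1) j ?_).trans
        (by omega))
      refine (natDegree_add_le _ _).trans (max_le (by simp) ?_)
      exact natDegree_C_mul_le s X |>.trans natDegree_X_le
  have hfe : ∀ z, f.eval z = form a' h' ![t, 1, z] := by
    intro z
    have hne : g' ![t, 1, z] ≠ 0 := g_ne_zero g' (vec_ne_zero t z)
    rw [← hc' _ hne]
    have hne2 : g (u + (s * z) • ![0, 0, 1]) ≠ 0 := by rw [← hgu]; exact hne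
    have : c (Projectivization.mk (ZMod p) (g' ![t, 1, z]) hne) =
        c (Projectivization.mk (ZMod p) (g (u + (s * z) • ![0, 0, 1])) hne2) := by
      congr 2
      exact hgu z
    rw [this, hc, form, hf]
    simp [eval_finsetSum]
  have h0 := coeff_mem_of_eval_mem (p := p) (⊥ : Submodule (ZMod p) (ZMod p))
    (fun k => (h' k + if k = 0 then C a' else 0).eval t - (if k ≤ r then f.coeff k else 0)) ?_
    k hkp
  · have hk0 : k ≠ 0 := by omega
    rw [Submodule.mem_bot] at h0
    simpa only [hk0, not_le.2 hk, if_false, add_zero, sub_zero] using h0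
  · intro z
    have e1 := form_affine a' h' hh' t z
    have e2 : f.eval z = ∑ k ∈ range p, z ^ k * (if k ≤ r then f.coeff k else 0) := by
      rw [eval_eq_sum_range' (n := p) (by omega)]
      refine Finset.sum_congr rfl fun j _ => ?_
      split_ifs with hj
      · ring
      · rw [coeff_eq_zero_of_natDegree_lt (by omega)]; simp
    rw [Submodule.mem_bot]
    simp only [smul_eq_mul, mul_sub, Finset.sum_sub_distrib]
    rw [← e1, ← e2, hfe, sub_self]

lemma ptMap_mk {p : ℕ} [Fact p.Prime] (g : (Fin 3 → ZMod p) ≃ₗ[ZMod p] (Fin 3 → ZMod p))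
    (v : Fin 3 → ZMod p) (hv : v ≠ 0) :
    ptMap p g (Projectivization.mk (ZMod p) v hv) =
      Projectivization.mk (ZMod p) (g v) (g_ne_zero g hv) := rfl

/-- For codewords, the rank bound at `P` can be read off in one coordinate system. -/
lemma rkLe_iff {p : ℕ} [Fact p.Prime] {c : PGPoint (ZMod p) → ZMod p}
    (hcc : c ∈ code p (ZMod p)) {P : PGPoint (ZMod p)}
    {g : (Fin 3 → ZMod p) ≃ₗ[ZMod p] (Fin 3 → ZMod p)}
    (hg : ptMap p g (Projectivization.mk (ZMod p) ![0, 0, 1] (e001ne p)) = P)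
    {a : ZMod p} {h : ℕ → (ZMod p)[X]} (hh : ∀ k, h k ∈ degreeLT (ZMod p) (p - k))
    (hc : ∀ v (hv : g v ≠ 0), c (Projectivization.mk (ZMod p) (g v) hv) = form a h v)
    (r : ℕ) : rkLe p c P r ↔ ∀ k, r < k → h k = 0 := by
  constructor
  · intro H
    rw [← degreeOf_formPoly_le_iff a h hh]
    exact H g hg _ (formPoly_isPolyRep a h fun v hv => hc v (g_ne_zero g hv))
  · intro H g' hg' Fc hFc
    obtain ⟨a', h', hh', hc'⟩ := exists_form_of_mem_code g' hcc
    rw [hFc.unique (formPoly_isPolyRep a' h' fun v hv => hc' v (g_ne_zero g' hv)),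
      degreeOf_formPoly_le_iff a' h' hh']
    rw [← hg, ptMap_mk, ptMap_mk, Projectivization.mk_eq_mk_iff'] at hg'
    obtain ⟨s, hs⟩ := hg'
    exact rank_transfer hs.symm hh' hc hc' H

/-! ### Coordinates adapted to the pencil -/

/-- Coordinates in which `P = (0, 0, 1)` and the line `l` through `P` is `Y = 0`. -/
lemma exists_frame {p : ℕ} [Fact p.Prime] (l P : PGPoint (ZMod p)) (hP : PGIncident l P) :
    ∃ (g : (Fin 3 → ZMod p) ≃ₗ[ZMod p] (Fin 3 → ZMod p)) (b : ZMod p), b ≠ 0 ∧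
      g ![0, 0, 1] = P.rep ∧ ∀ v, ∑ i, l.rep i * g v i = b * v 1 := by
  set φ : (Fin 3 → ZMod p) →ₗ[ZMod p] ZMod p := ∑ i, l.rep i • LinearMap.proj i with hφ
  have hφa : ∀ w, φ w = ∑ i, l.rep i * w i := by
    intro w; simp [hφ]
  have hφP : φ P.rep = 0 := by rw [hφa]; exact hP
  have hφ0 : φ ≠ 0 := by
    intro h
    apply l.rep_nonzero
    ext i
    have := LinearMap.congr_fun h (Pi.single i 1)
    rw [hφa] at this
    simpa [Pi.single_apply] using this
  obtain ⟨w2, hw2⟩ : ∃ w, φ w ≠ 0 := by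
    by_contra! h
    exact hφ0 (LinearMap.ext h)
  obtain ⟨w1, hw1, hw1'⟩ : ∃ w, φ w = 0 ∧ w ∉ Submodule.span (ZMod p) {P.rep} := by
    by_contra! h
    have hle : LinearMap.ker φ ≤ Submodule.span (ZMod p) {P.rep} := fun w hw => h w hw
    have h1 := Submodule.finrank_mono hle
    rw [finrank_span_singleton P.rep_nonzero] at h1
    have h2 := φ.finrank_range_add_finrank_ker
    have h3 := Submodule.finrank_le (LinearMap.range φ)
    simp at h2 h3
    omega
  set G : (Fin 3 → ZMod p) →ₗ[ZMod p] (Fin 3 → ZMod p) :=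
    (LinearMap.proj 0).smulRight w1 + (LinearMap.proj 1).smulRight w2 +
      (LinearMap.proj 2).smulRight P.rep with hG
  have hGa : ∀ v, G v = v 0 • w1 + v 1 • w2 + v 2 • P.rep := by intro v; simp [hG]
  have hφG : ∀ v, φ (G v) = φ w2 * v 1 := by
    intro v
    rw [hGa]
    simp [hw1, hφP, mul_comm]
  have hinj : Function.Injective G := by
    rw [injective_iff_map_eq_zero]
    intro v hv
    have h1 : v 1 = 0 := by
      have := hφG v
      rw [hv, map_zero] at this
      simpa [hw2] using this.symm
    rw [hGa, h1, zero_smul, add_zero] at hv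
    have h0 : v 0 = 0 := by
      by_contra h0
      apply hw1'
      rw [Submodule.mem_span_singleton]
      refine ⟨-(v 0)⁻¹ * v 2, ?_⟩
      rw [mul_smul, add_eq_zero_iff_eq_neg.1 ((add_comm _ _).trans hv)]
      simp [smul_smul, h0]
    rw [h0, zero_smul, zero_add] at hv
    have h2 : v 2 = 0 := (smul_eq_zero.1 hv).resolve_right P.rep_nonzero
    ext i
    fin_cases i <;> assumption
  refine ⟨LinearEquiv.ofInjectiveEndo G hinj, φ w2, hw2, ?_, ?_⟩
  · change G _ = _
    rw [hGa]; simp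
  · intro v
    rw [← hφa]
    exact hφG v

/-- Two lines whose equations are proportional in some coordinate system coincide. -/
lemma line_eq_of_proportional {p : ℕ} [Fact p.Prime]
    (g : (Fin 3 → ZMod p) ≃ₗ[ZMod p] (Fin 3 → ZMod p)) (l l' : PGPoint (ZMod p)) (s : ZMod p)
    (h : ∀ v, ∑ i, l.rep i * g v i = s * ∑ i, l'.rep i * g v i) : l = l' := by
  rw [← l.mk_rep, ← l'.mk_rep, Projectivization.mk_eq_mk_iff']
  refine ⟨s, ?_⟩
  ext i
  have := h (g.symm (Pi.single i 1))
  simpa [Pi.single_apply] using this.symm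

/-- In suitable coordinates `P = (0, 0, 1)` and the points off the `n` lines are the
`(t, 1, z)` with `t` in a set `T` of `p + 1 - n` elements. -/
lemma exists_coords {p : ℕ} [Fact p.Prime] {n : ℕ} (hn : 0 < n)
    (l : Fin n → PGPoint (ZMod p)) (P : PGPoint (ZMod p))
    (hinj : Function.Injective l) (hP : ∀ i, PGIncident (l i) P) :
    ∃ (g : (Fin 3 → ZMod p) ≃ₗ[ZMod p] (Fin 3 → ZMod p)) (T : Finset (ZMod p)),
      ptMap p g (Projectivization.mk (ZMod p) ![0, 0, 1] (e001ne p)) = P ∧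
      T.card + (n - 1) = p ∧
      ∀ v (hv : g v ≠ 0), (∃ i, PGIncident (l i) (Projectivization.mk (ZMod p) (g v) hv)) ↔
        (v 1 = 0 ∨ v 0 / v 1 ∉ T) := by
  set i0 : Fin n := ⟨0, hn⟩
  obtain ⟨g, b, hb, hg, hl0⟩ := exists_frame (l i0) P (hP i0)
  set α : Fin n → ZMod p := fun j => ∑ i, (l j).rep i * g ![1, 0, 0] i with hα
  set β : Fin n → ZMod p := fun j => ∑ i, (l j).rep i * g ![0, 1, 0] i with hβ
  have hform : ∀ j v, ∑ i, (l j).rep i * g v i = α j * v 0 + β j * v 1 := by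
    intro j v
    have e : v = v 0 • ![1, 0, 0] + v 1 • ![0, 1, 0] + v 2 • ![0, 0, 1] := by
      ext i; fin_cases i <;> simp
    have hPj : ∑ i, (l j).rep i * P.rep i = 0 := hP j
    conv_lhs => rw [e]
    simp only [map_add, map_smul, hg, Pi.add_apply, Pi.smul_apply, smul_eq_mul, hα, hβ,
      Fin.sum_univ_three] at hPj ⊢
    linear_combination v 2 * hPj
  have hα0 : α i0 = 0 := by simp [hα, hl0]
  have hβ0 : β i0 ≠ 0 := by simpa [hβ, hl0] using hb
  have hαne : ∀ j, j ≠ i0 → α j ≠ 0 := by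
    intro j hj h
    refine hj (hinj (line_eq_of_proportional g _ _ (β j / β i0) fun v => ?_))
    rw [hform, hform, h, hα0]
    field_simp
    ring
  set τ : Fin n → ZMod p := fun j => -β j / α j with hτ
  have hτinj : Set.InjOn τ ((univ.erase i0 : Finset (Fin n)) : Set (Fin n)) := by
    intro j hj k hk hjk
    have hj := hαne j (by simpa using hj)
    have hk := hαne k (by simpa using hk)
    refine hinj (line_eq_of_proportional g _ _ (α j / α k) fun v => ?_)
    simp only [hτ] at hjk
    rw [div_eq_div_iff hj hk] at hjk
    rw [hform, hform]
    field_simp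
    linear_combination -v 1 * hjk
  refine ⟨g, ((univ.erase i0).image τ)ᶜ, ?_, ?_, ?_⟩
  · rw [ptMap_mk, ← P.mk_rep, Projectivization.mk_eq_mk_iff']
    exact ⟨1, by rw [one_smul, hg]⟩
  · have h1 := Finset.card_compl_add_card ((univ.erase i0).image τ)
    rw [Finset.card_image_of_injOn hτinj, Finset.card_erase_of_mem (Finset.mem_univ _),
      Finset.card_univ, Fintype.card_fin, ZMod.card] at h1
    exact h1
  · intro v hv
    simp only [incident_mk, hform, Finset.mem_compl, not_not, Finset.mem_image, Finset.mem_erase,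
      Finset.mem_univ, and_true]
    constructor
    · rintro ⟨j, hj⟩
      by_cases hv1 : v 1 = 0
      · exact Or.inl hv1
      · right
        have hji : j ≠ i0 := by
          rintro rfl
          rw [hα0] at hj
          simp [hβ0, hv1] at hj
        refine ⟨j, hji, ?_⟩
        have := hαne j hji
        simp only [hτ]
        rw [div_eq_div_iff this hv1]
        linear_combination -hj
    · rintro (hv1 | ⟨j, hji, hj⟩)
      · exact ⟨i0, by rw [hα0, hv1]; ring⟩
      · by_cases hv1 : v 1 = 0
        · exact ⟨i0, by rw [hα0, hv1]; ring⟩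
        · refine ⟨j, ?_⟩
          have := hαne j hji
          simp only [hτ] at hj
          rw [div_eq_div_iff this hv1] at hj
          linear_combination -hj

/-! ### Codewords supported on the pencil -/

/-- A codeword vanishes off the pencil iff the coefficient of each `z ^ k` vanishes on `T`. -/
lemma support_iff {p : ℕ} [Fact p.Prime] {n : ℕ} {l : Fin n → PGPoint (ZMod p)}
    {g : (Fin 3 → ZMod p) ≃ₗ[ZMod p] (Fin 3 → ZMod p)} {T : Finset (ZMod p)}
    (hT : ∀ v (hv : g v ≠ 0), (∃ i, PGIncident (l i) (Projectivization.mk (ZMod p) (g v) hv)) ↔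
        (v 1 = 0 ∨ v 0 / v 1 ∉ T))
    {c : PGPoint (ZMod p) → ZMod p} {a : ZMod p} {h : ℕ → (ZMod p)[X]}
    (hh : ∀ k, h k ∈ degreeLT (ZMod p) (p - k))
    (hc : ∀ v (hv : g v ≠ 0), c (Projectivization.mk (ZMod p) (g v) hv) = form a h v) :
    (∀ Q, c Q ≠ 0 → ∃ i, PGIncident (l i) Q) ↔
      ∀ k, ∀ t ∈ T, (h k + if k = 0 then C a else 0).eval t = 0 := by
  constructor
  · intro H k t ht
    by_cases hk : k < p
    · have := coeff_mem_of_eval_mem (p := p) (⊥ : Submodule (ZMod p) (ZMod p))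
        (fun k => (h k + if k = 0 then C a else 0).eval t) ?_ k hk
      · exact (Submodule.mem_bot _).1 this
      · intro z
        rw [Submodule.mem_bot]
        simp only [smul_eq_mul]
        rw [← form_affine a h hh, ← hc _ (g_ne_zero g (vec_ne_zero t z))]
        by_contra hne
        have := (hT _ _).1 (H _ hne)
        simp [ht] at this
    · have h0 := hh k
      rw [Nat.sub_eq_zero_of_le (not_lt.1 hk), mem_degreeLT] at h0
      have h1 : h k = 0 := by simpa using h0
      have hp := (Fact.out : p.Prime).pos
      rw [h1, if_neg (by omega)]
      simp
  · intro H Q hQ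
    obtain ⟨v, hv, rfl⟩ : ∃ v, ∃ hv : g v ≠ 0, Q = Projectivization.mk (ZMod p) (g v) hv := by
      refine ⟨g.symm Q.rep, by simpa using Q.rep_nonzero, ?_⟩
      conv_lhs => rw [← Q.mk_rep]
      congr 1
      simp
    rw [hT]
    by_contra! hcon
    apply hQ
    rw [hc, ← form_smul a h v (v 1)⁻¹ (inv_ne_zero hcon.1)]
    have e : (v 1)⁻¹ • v = ![v 0 / v 1, 1, v 2 / v 1] := by
      ext i
      fin_cases i <;> simp [hcon.1, div_eq_inv_mul]
    rw [e, form_affine a h hh]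
    refine Finset.sum_eq_zero fun k _ => ?_
    rw [H k _ hcon.2, mul_zero]

/-- The polynomials of degree less than `p - k` that vanish on `T` are the multiples of
`∏ t ∈ T, (X - t)` by polynomials of degree less than `n - 1 - k`. -/
lemma vanish_iff {p : ℕ} [Fact p.Prime] {n : ℕ} {T : Finset (ZMod p)}
    (hcard : T.card + (n - 1) = p) (k : ℕ) (f : (ZMod p)[X]) :
    (f ∈ degreeLT (ZMod p) (p - k) ∧ ∀ t ∈ T, f.eval t = 0) ↔
      ∃ q ∈ degreeLT (ZMod p) (n - 1 - k), f = (∏ t ∈ T, (X - C t)) * q := by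
  have hmon : (∏ t ∈ T, (X - C t)).Monic := monic_prod_of_monic _ _ fun t _ => monic_X_sub_C t
  have hdeg : (∏ t ∈ T, (X - C t)).natDegree = T.card := by simp
  constructor
  · rintro ⟨hf, hv⟩
    have hdvd : (∏ t ∈ T, (X - C t)) ∣ f := by
      refine Finset.prod_dvd_of_coprime ?_ fun t ht => dvd_iff_isRoot.2 (hv t ht)
      intro s _ t _ hst
      exact pairwise_coprime_X_sub_C Function.injective_id hst
    obtain ⟨q, rfl⟩ := hdvd
    refine ⟨q, ?_, rfl⟩
    by_cases hq : q = 0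
    · rw [hq]; exact Submodule.zero_mem _
    · rw [mem_degreeLT, degree_eq_natDegree (mul_ne_zero hmon.ne_zero hq), hmon.natDegree_mul' hq,
        hdeg] at hf
      rw [mem_degreeLT, degree_eq_natDegree hq]
      norm_cast at hf ⊢
      omega
  · rintro ⟨q, hq, rfl⟩
    constructor
    · by_cases hq0 : q = 0
      · rw [hq0, mul_zero]; exact Submodule.zero_mem _
      · rw [mem_degreeLT, degree_eq_natDegree hq0] at hq
        rw [mem_degreeLT, degree_eq_natDegree (mul_ne_zero hmon.ne_zero hq0),
          hmon.natDegree_mul' hq0, hdeg]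
        norm_cast at hq ⊢
        omega
    · intro t ht
      rw [eval_mul, eval_prod, Finset.prod_eq_zero ht (by simp), zero_mul]

/-- The parameters of a codeword of rank at most `r` on the pencil: a scalar, and for each
`k ≤ r` the coefficients of a polynomial of degree less than `n - 1 - k`. -/
abbrev Param (p n r : ℕ) : Type := ZMod p × ((k : Fin (r + 1)) → Fin (n - 1 - k) → ZMod p)

/-- The coefficient polynomials `h k` of the codeword with the given parameters. The scalar is
subtracted from `h 0` so that `a + h 0` is the multiple of `∏ t ∈ T, (X - t)`. -/
def paramPoly {p n r : ℕ} (T : Finset (ZMod p)) (w : Param p n r) (k : ℕ) : (ZMod p)[X] :=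
  (if hk : k < r + 1 then
    (∏ t ∈ T, (X - C t)) * ((degreeLTEquiv (ZMod p) (n - 1 - k)).symm (w.2 ⟨k, hk⟩)).1
    else 0) - if k = 0 then C w.1 else 0

/-- The linear map from parameters to codewords. -/
def paramMap {p n r : ℕ} [Fact p.Prime]
    (g : (Fin 3 → ZMod p) ≃ₗ[ZMod p] (Fin 3 → ZMod p)) (T : Finset (ZMod p)) :
    Param p n r →ₗ[ZMod p] (PGPoint (ZMod p) → ZMod p) where
  toFun w Q := form w.1 (paramPoly T w) (g.symm Q.rep)
  map_add' w w' := by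
    have e : ∀ k, paramPoly T (w + w') k = paramPoly T w k + paramPoly T w' k := by
      intro k
      unfold paramPoly
      split_ifs <;> simp [mul_add] <;> ring
    funext Q
    simp only [form, e, Prod.fst_add, map_add, mul_add, Finset.sum_add_distrib, Pi.add_apply]
    ring
  map_smul' s w := by
    have e : ∀ k, paramPoly T (s • w) k = s • paramPoly T w k := by
      intro k
      unfold paramPoly
      split_ifs <;> simp [smul_sub, smul_eq_C_mul, mul_left_comm]
    funext Q
    simp only [form, e, Prod.smul_fst, map_smul, Pi.smul_apply, smul_eq_mul, mul_add,
      Finset.mul_sum, RingHom.id_apply]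
    congr 1
    refine Finset.sum_congr rfl fun k _ => ?_
    ring

lemma paramMap_mk {p n r : ℕ} [Fact p.Prime]
    (g : (Fin 3 → ZMod p) ≃ₗ[ZMod p] (Fin 3 → ZMod p)) (T : Finset (ZMod p)) (w : Param p n r)
    (v : Fin 3 → ZMod p) (hv : g v ≠ 0) :
    paramMap g T w (Projectivization.mk (ZMod p) (g v) hv) = form w.1 (paramPoly T w) v := by
  obtain ⟨s, hs⟩ := Projectivization.exists_smul_eq_mk_rep (ZMod p) (g v) hv
  change form w.1 (paramPoly T w) (g.symm (Projectivization.mk (ZMod p) (g v) hv).rep) = _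
  rw [← hs, Units.smul_def, map_smul, LinearEquiv.symm_apply_apply]
  exact form_smul _ _ _ _ s.ne_zero

lemma paramPoly_add {p n r : ℕ} (T : Finset (ZMod p)) (w : Param p n r) (k : ℕ) :
    paramPoly T w k + (if k = 0 then C w.1 else 0) = if hk : k < r + 1 then
      (∏ t ∈ T, (X - C t)) * ((degreeLTEquiv (ZMod p) (n - 1 - k)).symm (w.2 ⟨k, hk⟩)).1
      else 0 := by
  rw [paramPoly, sub_add_cancel]

lemma C_mem_degreeLT {p : ℕ} [Fact p.Prime] (a : ZMod p) (k : ℕ) :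
    (if k = 0 then C a else 0 : (ZMod p)[X]) ∈ degreeLT (ZMod p) (p - k) := by
  split_ifs with hk
  · subst hk
    rw [mem_degreeLT]
    exact degree_C_le.trans_lt (by exact_mod_cast (Fact.out : p.Prime).pos)
  · exact Submodule.zero_mem _

lemma paramPoly_add_vanish {p n r : ℕ} [Fact p.Prime] {T : Finset (ZMod p)}
    (hcard : T.card + (n - 1) = p) (w : Param p n r) (k : ℕ) :
    (paramPoly T w k + (if k = 0 then C w.1 else 0)) ∈ degreeLT (ZMod p) (p - k) ∧
      ∀ t ∈ T, (paramPoly T w k + (if k = 0 then C w.1 else 0)).eval t = 0 := by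
  rw [vanish_iff hcard, paramPoly_add]
  split_ifs with hk
  · exact ⟨_, Subtype.property _, rfl⟩
  · exact ⟨0, Submodule.zero_mem _, by simp⟩

lemma paramPoly_mem {p n r : ℕ} [Fact p.Prime] {T : Finset (ZMod p)}
    (hcard : T.card + (n - 1) = p) (w : Param p n r) (k : ℕ) :
    paramPoly T w k ∈ degreeLT (ZMod p) (p - k) := by
  have := Submodule.sub_mem _ (paramPoly_add_vanish hcard w k).1 (C_mem_degreeLT w.1 k)
  rwa [add_sub_cancel_right] at this

lemma paramMap_injective {p n r : ℕ} [Fact p.Prime]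
    (g : (Fin 3 → ZMod p) ≃ₗ[ZMod p] (Fin 3 → ZMod p)) {T : Finset (ZMod p)}
    (hcard : T.card + (n - 1) = p) (hr : r + 2 ≤ n) :
    Function.Injective (paramMap (n := n) (r := r) g T) := by
  have hp := (Fact.out : p.Prime).two_le
  rw [injective_iff_map_eq_zero]
  intro w hw
  have hv : ∀ v, g v ≠ 0 → form w.1 (paramPoly T w) v = 0 := by
    intro v hv
    rw [← paramMap_mk g T w v hv, hw, Pi.zero_apply]
  have hH : ∀ k < p, paramPoly T w k + (if k = 0 then C w.1 else 0) = 0 := by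
    intro k hk
    refine eq_zero_of_eval_all (paramPoly_add_vanish hcard w k).1 (by omega) fun t => ?_
    have := coeff_mem_of_eval_mem (p := p) (⊥ : Submodule (ZMod p) (ZMod p))
      (fun k => (paramPoly T w k + if k = 0 then C w.1 else 0).eval t) ?_ k hk
    · exact (Submodule.mem_bot _).1 this
    · intro z
      rw [Submodule.mem_bot]
      simp only [smul_eq_mul]
      rw [← form_affine _ _ (paramPoly_mem hcard w)]
      exact hv _ (g_ne_zero g (vec_ne_zero t z))
  have h1 : w.1 = 0 := by
    -- At the vertex only the scalar survives.
    have h2 := hv ![0, 0, 1] (g_ne_zero g (e001ne p))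
    rw [form, Finset.sum_eq_zero, add_zero] at h2
    · exact h2
    · intro k hk
      have hk := Finset.mem_range.1 hk
      rw [eq_neg_of_add_eq_zero_left (hH k hk)]
      split_ifs with hk0
      · subst hk0
        rw [map_neg, homEval_C]
        simp [zero_pow (show p - 1 ≠ 0 by omega)]
      · simp
  refine Prod.ext h1 (funext fun k => ?_)
  have hmon : (∏ t ∈ T, (X - C t)).Monic := monic_prod_of_monic _ _ fun t _ => monic_X_sub_C t
  have h3 := hH k (by omega)
  rw [paramPoly_add, dif_pos k.2] at h3
  have h4 := (mul_eq_zero.1 h3).resolve_left hmon.ne_zero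
  have h5 := (Submodule.coe_eq_zero (p := degreeLT (ZMod p) (n - 1 - k))).1 h4
  exact (LinearEquiv.map_eq_zero_iff _).1 h5

/-- The parametrization hits exactly the codewords on the pencil of rank at most `r` at `P`. -/
lemma range_paramMap {p n r : ℕ} [Fact p.Prime] {l : Fin n → PGPoint (ZMod p)}
    {P : PGPoint (ZMod p)}
    {g : (Fin 3 → ZMod p) ≃ₗ[ZMod p] (Fin 3 → ZMod p)} {T : Finset (ZMod p)}
    (hg : ptMap p g (Projectivization.mk (ZMod p) ![0, 0, 1] (e001ne p)) = P)
    (hcard : T.card + (n - 1) = p)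
    (hT : ∀ v (hv : g v ≠ 0), (∃ i, PGIncident (l i) (Projectivization.mk (ZMod p) (g v) hv)) ↔
        (v 1 = 0 ∨ v 0 / v 1 ∉ T)) :
    (LinearMap.range (paramMap (n := n) (r := r) g T) : Set (PGPoint (ZMod p) → ZMod p)) =
      {c | c ∈ code p (ZMod p) ∧ (∀ Q, c Q ≠ 0 → ∃ i, PGIncident (l i) Q) ∧ rkLe p c P r} := by
  ext c
  simp only [SetLike.mem_coe, LinearMap.mem_range, Set.mem_ofPred_eq]
  constructor
  · rintro ⟨w, rfl⟩
    have hmem : paramMap g T w ∈ code p (ZMod p) := form_mem_code g _ _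
    refine ⟨hmem, ?_, ?_⟩
    · rw [support_iff hT (paramPoly_mem hcard w) (paramMap_mk g T w)]
      exact fun k => (paramPoly_add_vanish hcard w k).2
    · rw [rkLe_iff hmem hg (paramPoly_mem hcard w) (paramMap_mk g T w)]
      intro k hk
      rw [paramPoly, dif_neg (by omega), if_neg (by omega), sub_zero]
  · rintro ⟨hmem, hsupp, hrk⟩
    obtain ⟨a, h, hh, hc⟩ := exists_form_of_mem_code g hmem
    rw [support_iff hT hh hc] at hsupp
    rw [rkLe_iff hmem hg hh hc] at hrk
    have hq : ∀ k, ∃ q ∈ degreeLT (ZMod p) (n - 1 - k),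
        h k + (if k = 0 then C a else 0) = (∏ t ∈ T, (X - C t)) * q := fun k =>
      (vanish_iff hcard k _).1 ⟨Submodule.add_mem _ (hh k) (C_mem_degreeLT a k), hsupp k⟩
    choose q hq1 hq2 using hq
    set w : Param p n r := (a, fun k => degreeLTEquiv (ZMod p) _ ⟨q k, hq1 k⟩) with hw
    have hpoly : paramPoly T w = h := by
      funext k
      rw [paramPoly]
      split_ifs with hk hk0 hk0
      · simp only [hw, LinearEquiv.symm_apply_apply]
        rw [← hq2 k, if_pos hk0, add_sub_cancel_right]
      · simp only [hw, LinearEquiv.symm_apply_apply]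
        rw [← hq2 k, if_neg hk0, add_zero, sub_zero]
      · omega
      · rw [hrk k (by omega), sub_zero]
    refine ⟨w, ?_⟩
    funext Q
    obtain ⟨v, hv, rfl⟩ : ∃ v, ∃ hv : g v ≠ 0, Q = Projectivization.mk (ZMod p) (g v) hv := by
      refine ⟨g.symm Q.rep, by simpa using Q.rep_nonzero, ?_⟩
      conv_lhs => rw [← Q.mk_rep]
      congr 1
      simp
    rw [paramMap_mk, hc, hpoly]

/-- Codewords on `n` concurrent lines have rank at most `n - 2` at the common point: a nonzero
`h k` is divisible by `∏ t ∈ T, (X - t)`, so `p + 1 - n ≤ p - 1 - k`. -/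
lemma rkLe_of_support {p n : ℕ} [Fact p.Prime] (hn : 2 ≤ n) {l : Fin n → PGPoint (ZMod p)}
    {P : PGPoint (ZMod p)}
    {g : (Fin 3 → ZMod p) ≃ₗ[ZMod p] (Fin 3 → ZMod p)} {T : Finset (ZMod p)}
    (hg : ptMap p g (Projectivization.mk (ZMod p) ![0, 0, 1] (e001ne p)) = P)
    (hcard : T.card + (n - 1) = p)
    (hT : ∀ v (hv : g v ≠ 0), (∃ i, PGIncident (l i) (Projectivization.mk (ZMod p) (g v) hv)) ↔
        (v 1 = 0 ∨ v 0 / v 1 ∉ T))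
    {c : PGPoint (ZMod p) → ZMod p} (hmem : c ∈ code p (ZMod p))
    (hsupp : ∀ Q, c Q ≠ 0 → ∃ i, PGIncident (l i) Q) : rkLe p c P (n - 2) := by
  obtain ⟨a, h, hh, hc⟩ := exists_form_of_mem_code g hmem
  rw [support_iff hT hh hc] at hsupp
  rw [rkLe_iff hmem hg hh hc]
  intro k hk
  obtain ⟨q, hq1, hq2⟩ := (vanish_iff hcard k _).1
    ⟨Submodule.add_mem _ (hh k) (C_mem_degreeLT a k), hsupp k⟩
  rw [show n - 1 - k = 0 by omega, mem_degreeLT] at hq1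
  have hq0 : q = 0 := by simpa using hq1
  rw [hq0, mul_zero, if_neg (by omega), add_zero] at hq2
  exact hq2

lemma finrank_param {p n r : ℕ} [Fact p.Prime] (hr : r + 2 ≤ n) :
    Module.finrank (ZMod p) (Param p n r) = (r + 1) * (2 * n - 2 - r) / 2 + 1 := by
  rw [Module.finrank_prod, Module.finrank_self, Module.finrank_pi_fintype]
  simp only [Module.finrank_fin_fun]
  rw [add_comm, Fin.sum_univ_eq_sum_range (fun k => n - 1 - k)]
  congr 1
  have key : ∀ m, m + 1 ≤ n →
      (∑ k ∈ range (m + 1), (n - 1 - k)) * 2 = (m + 1) * (2 * n - 2 - m) := by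
    intro m
    induction m with
    | zero => intro _; simp; omega
    | succ m ih =>
      intro hm
      rw [Finset.sum_range_succ, add_mul, ih (by omega)]
      obtain ⟨d, rfl⟩ := Nat.exists_eq_add_of_le hm
      rw [show 2 * (m + 1 + 1 + d) - 2 - m = m + 2 + 2 * d by omega,
        show m + 1 + 1 + d - 1 - (m + 1) = d by omega,
        show 2 * (m + 1 + 1 + d) - 2 - (m + 1) = m + 1 + 2 * d by omega]
      ring
  rw [← key r (by omega), Nat.mul_div_cancel _ (by norm_num)]

theorem stmt13 (p : ℕ) [Fact p.Prime] (n : ℕ)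
    (l : Fin n → PGPoint (ZMod p)) (P : PGPoint (ZMod p))
    (hinj : Function.Injective l) (hP : ∀ i, PGIncident (l i) P)
    (r : ℕ) (hr : r + 2 ≤ n) :
    (∃ S : Submodule (ZMod p) (PGPoint (ZMod p) → ZMod p),
        (S : Set (PGPoint (ZMod p) → ZMod p)) =
          {c | c ∈ code p (ZMod p) ∧ (∀ Q, c Q ≠ 0 → ∃ i, PGIncident (l i) Q) ∧
            rkLe p c P r} ∧
        Module.finrank (ZMod p) S = (r + 1) * (2 * n - 2 - r) / 2 + 1) ∧
      (∃ S' : Submodule (ZMod p) (PGPoint (ZMod p) → ZMod p),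
        (S' : Set (PGPoint (ZMod p) → ZMod p)) =
          {c | c ∈ code p (ZMod p) ∧ ∀ Q, c Q ≠ 0 → ∃ i, PGIncident (l i) Q} ∧
        Module.finrank (ZMod p) S' = n * (n - 1) / 2 + 1) := by
  obtain ⟨g, T, hg, hcard, hT⟩ := exists_coords (by omega) l P hinj hP
  refine ⟨⟨LinearMap.range (paramMap g T), range_paramMap hg hcard hT, ?_⟩,
    ⟨LinearMap.range (paramMap (n := n) (r := n - 2) g T), ?_, ?_⟩⟩
  · rw [LinearMap.finrank_range_of_inj (paramMap_injective g hcard hr), finrank_param hr]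
  · rw [range_paramMap hg hcard hT]
    ext c
    exact ⟨fun h => ⟨h.1, h.2.1⟩,
      fun h => ⟨h.1, h.2, rkLe_of_support (by omega) hg hcard hT h.1 h.2⟩⟩
  · rw [LinearMap.finrank_range_of_inj (paramMap_injective g hcard (by omega)),
      finrank_param (by omega)]
    rw [show n - 2 + 1 = n - 1 by omega, show 2 * n - 2 - (n - 2) = n by omega, mul_comm]

end
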